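/- arXiv:2507.12576 — 2 statements merged into one kernel-verified Lean document; each statement's English description precedes it below -/
import Mathlib

section
/- There exists an entire function S : ℂ → ℂ such that: (i) the zero set of S is exactly {tₙ : n ∈ ℕ}; (ii) every zero of S is simple (i.e., S'(tₙ) ≠ 0 for all n); (iii) S satisfies conj(S(conj z)) = S(z) for all z ∈ ℂ; and (iv) |S'(tₙ)| = |sₙ| for every n ∈ ℕ. -/
open Filter Topology ComplexConjugate

/-- The Weierstrass elementary factor of high degree at `a`, written as `1 + g`, is close to `1`
on the disc of radius `|a| / 2`. -/
lemma exists_elementary_factor (a : ℝ) {ε : ℝ} (hε : 0 < ε) :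
    ∃ g : ℂ → ℂ, Differentiable ℂ g ∧ (∀ z, g (conj z) = conj (g z)) ∧
      (∀ z, 1 + g z = 0 ↔ z = a) ∧ deriv g a ≠ 0 ∧
      ∀ z : ℂ, ‖z‖ < |a| / 2 → ‖g z‖ ≤ ε := by
  rcases eq_or_ne a 0 with rfl | ha
  · refine ⟨fun z ↦ z - 1, by fun_prop, by simp, by simp, by simp, fun z hz ↦ ?_⟩
    rw [abs_zero, zero_div] at hz
    exact absurd hz (norm_nonneg z).not_gt
  have hac : (a : ℂ) ≠ 0 := by exact_mod_cast ha
  obtain ⟨m, hm⟩ := exists_pow_lt_of_lt_one (lt_min one_pos (half_pos hε)) one_half_lt_one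
  have hT : Differentiable ℂ (Complex.logTaylor (m + 1)) :=
    fun z ↦ (Complex.hasDerivAt_logTaylor m z).differentiableAt
  have hTconj (z : ℂ) :
      Complex.logTaylor (m + 1) (conj z) = conj (Complex.logTaylor (m + 1) z) := by
    simp [Complex.logTaylor]
  set E : ℂ → ℂ := fun z ↦ Complex.exp (-Complex.logTaylor (m + 1) (-(z / a))) with hE
  have hEd : Differentiable ℂ E := by fun_prop
  refine ⟨fun z ↦ (1 - z / a) * E z - 1, by fun_prop, fun z ↦ ?_, fun z ↦ ?_, ?_, fun z hz ↦ ?_⟩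
  · have h : -(conj z / (a : ℂ)) = conj (-(z / a)) := by simp
    have hEconj : E (conj z) = conj (E z) := by
      simp only [hE]
      rw [h, hTconj, ← Complex.exp_conj, map_neg conj]
    simp [hEconj]
  · simp only [add_sub_cancel, mul_eq_zero, hE, Complex.exp_ne_zero, or_false]
    rw [sub_eq_zero, eq_comm, div_eq_one_iff_eq hac]
  · have h1 : HasDerivAt (fun z : ℂ ↦ 1 - z / a) (-(1 / a)) (a : ℂ) :=
      ((hasDerivAt_id (a : ℂ)).div_const (a : ℂ)).const_sub 1
    have h2 := ((h1.mul (hEd a).hasDerivAt).sub_const 1).deriv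
    have h3 : deriv (fun z : ℂ ↦ (1 - z / a) * E z - 1) a = -(1 / a) * E a := by
      simpa [Pi.mul_def, hac] using h2
    rw [h3]
    exact mul_ne_zero (by simpa using hac) (Complex.exp_ne_zero _)
  · have hw : ‖-(z / (a : ℂ))‖ ≤ 1 / 2 := by
      rw [norm_neg, norm_div, Complex.norm_real, Real.norm_eq_abs,
        div_le_iff₀ (abs_pos.2 ha)]
      linarith
    set w : ℂ := -(z / a)
    have hw1 : ‖w‖ < 1 := by linarith
    have hne : 1 + w ≠ 0 := Complex.slitPlane_ne_zero (Complex.mem_slitPlane_of_norm_lt_one hw1)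
    have herr : ‖Complex.log (1 + w) - Complex.logTaylor (m + 1) w‖ ≤ (1 / 2) ^ m := by
      refine (Complex.norm_log_sub_logTaylor_le m hw1).trans ?_
      have h2 : (1 - ‖w‖)⁻¹ ≤ 2 := by
        rw [inv_le_comm₀ (by linarith) two_pos]
        linarith
      calc ‖w‖ ^ (m + 1) * (1 - ‖w‖)⁻¹ / (m + 1)
          ≤ ‖w‖ ^ (m + 1) * (1 - ‖w‖)⁻¹ := div_le_self
            (mul_nonneg (by positivity) (inv_nonneg.2 (by linarith))) (by simp)
        _ ≤ (1 / 2) ^ (m + 1) * 2 := by gcongr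
        _ = (1 / 2) ^ m := by ring
    have hexp : (1 - z / a) * E z - 1
        = Complex.exp (Complex.log (1 + w) - Complex.logTaylor (m + 1) w) - 1 := by
      rw [sub_eq_add_neg _ (Complex.logTaylor _ _), Complex.exp_add, Complex.exp_log hne,
        sub_eq_add_neg 1]
    have h1 := hm.le.trans (min_le_left _ _)
    have h2 := hm.le.trans (min_le_right _ _)
    simp only [hexp]
    linarith [Complex.norm_exp_sub_one_le (herr.trans h1)]

section LocallyGeometric

variable {t : ℕ → ℝ} {g : ℕ → ℂ → ℂ}

lemma eventually_forall_ball_norm_le_of_half_disc (hdisc : ∀ R : ℝ, {n : ℕ | |t n| ≤ R}.Finite)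
    (hb : ∀ n (z : ℂ), ‖z‖ < |t n| / 2 → ‖g n z‖ ≤ (1 / 2) ^ n) (R : ℝ) :
    ∀ᶠ n in cofinite, ∀ z ∈ Metric.ball (0 : ℂ) R, ‖g n z‖ ≤ (1 / 2) ^ n := by
  have h : ∀ᶠ n in cofinite, ¬ |t n| ≤ 2 * R := by
    simpa [eventually_cofinite] using hdisc (2 * R)
  filter_upwards [h] with n hn z hz
  rw [mem_ball_zero_iff] at hz
  exact hb n z (by linarith)

lemma summable_norm_of_half_disc (hdisc : ∀ R : ℝ, {n : ℕ | |t n| ≤ R}.Finite)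
    (hb : ∀ n (z : ℂ), ‖z‖ < |t n| / 2 → ‖g n z‖ ≤ (1 / 2) ^ n) (z : ℂ) :
    Summable fun n ↦ ‖g n z‖ := by
  refine summable_geometric_two.of_norm_bounded_eventually ?_
  filter_upwards [eventually_forall_ball_norm_le_of_half_disc hdisc hb (‖z‖ + 1)] with n hn
  simpa using hn z (by simp)

lemma differentiable_tsum_of_half_disc (hdisc : ∀ R : ℝ, {n : ℕ | |t n| ≤ R}.Finite)
    (hb : ∀ n (z : ℂ), ‖z‖ < |t n| / 2 → ‖g n z‖ ≤ (1 / 2) ^ n)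
    (hg : ∀ n, Differentiable ℂ (g n)) : Differentiable ℂ fun z ↦ ∑' n, g n z := by
  rw [← differentiableOn_univ]
  refine SummableLocallyUniformlyOn.differentiableOn isOpen_univ ?_ fun n z _ ↦ hg n z
  refine .of_locally_bounded_eventually isOpen_univ fun K _ hK ↦
    ⟨_, summable_geometric_two, ?_⟩
  obtain ⟨R, hR⟩ := hK.isBounded.subset_ball 0
  filter_upwards [eventually_forall_ball_norm_le_of_half_disc hdisc hb R] with n hn z hz
  exact hn z (hR hz)

lemma differentiable_tprod_of_half_disc (hdisc : ∀ R : ℝ, {n : ℕ | |t n| ≤ R}.Finite)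
    (hb : ∀ n (z : ℂ), ‖z‖ < |t n| / 2 → ‖g n z‖ ≤ (1 / 2) ^ n)
    (hg : ∀ n, Differentiable ℂ (g n)) : Differentiable ℂ fun z ↦ ∏' n, (1 + g n z) := by
  intro z
  have hz : z ∈ Metric.ball (0 : ℂ) (‖z‖ + 1) := by simp
  have h := Summable.hasProdLocallyUniformlyOn_one_add Metric.isOpen_ball summable_geometric_two
    (eventually_forall_ball_norm_le_of_half_disc hdisc hb (‖z‖ + 1))
    fun n ↦ (hg n).continuous.continuousOn
  rw [hasProdLocallyUniformlyOn_iff_tendstoLocallyUniformlyOn] at h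
  refine (h.differentiableOn (Eventually.of_forall fun s ↦ ?_) Metric.isOpen_ball).differentiableAt
    (Metric.isOpen_ball.mem_nhds hz)
  have : Differentiable ℂ fun z ↦ ∏ n ∈ s, (1 + g n z) :=
    Differentiable.fun_finsetProd fun n _ ↦ (hg n).const_add 1
  exact this.differentiableOn

lemma conj_tprod_of_half_disc (hdisc : ∀ R : ℝ, {n : ℕ | |t n| ≤ R}.Finite)
    (hb : ∀ n (z : ℂ), ‖z‖ < |t n| / 2 → ‖g n z‖ ≤ (1 / 2) ^ n)
    (hg : ∀ n z, g n (conj z) = conj (g n z)) (z : ℂ) :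
    ∏' n, (1 + g n (conj z)) = conj (∏' n, (1 + g n z)) := by
  rw [Multipliable.map_tprod
    (multipliable_one_add_of_summable (summable_norm_of_half_disc hdisc hb z)) (starRingEnd ℂ)
    Complex.continuous_conj]
  simp [hg]

end LocallyGeometric

/-- **Weierstrass product**: a real entire function with simple zeros exactly at the `t n`, together
with its cofactors `G n` obtained by removing the `n`-th elementary factor. -/
lemma exists_weierstrass_product {t : ℕ → ℝ} (ht : Function.Injective t)
    (hdisc : ∀ R : ℝ, {n : ℕ | |t n| ≤ R}.Finite) :
    ∃ (W : ℂ → ℂ) (G : ℕ → ℂ → ℂ), Differentiable ℂ W ∧ (∀ z, W (conj z) = conj (W z)) ∧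
      (∀ z, W z = 0 ↔ ∃ n, z = t n) ∧ (∀ n, deriv W (t n) ≠ 0) ∧
      (∀ n, Differentiable ℂ (G n)) ∧ (∀ n z, G n (conj z) = conj (G n z)) ∧
      (∀ n, G n (t n) ≠ 0) ∧ ∀ n k, k ≠ n → G n (t k) = 0 := by
  choose g hg hgconj hg0 hg' hb using
    fun n : ℕ ↦ exists_elementary_factor (t n) (pow_pos (one_half_pos (α := ℝ)) n)
  set c : ℕ → ℕ → ℂ → ℂ := fun k n z ↦ if n = k then 0 else g n z with hc
  have hcb k n (z : ℂ) (hz : ‖z‖ < |t n| / 2) : ‖c k n z‖ ≤ (1 / 2) ^ n := by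
    by_cases h : n = k
    · simp [hc, h]
    · simpa [hc, h] using hb n z hz
  have hcd k n : Differentiable ℂ (c k n) := by
    by_cases h : n = k
    · simp [hc, h]
    · simpa [hc, h] using hg n
  have hcconj k n z : c k n (conj z) = conj (c k n z) := by
    by_cases h : n = k
    · simp [hc, h]
    · simpa [hc, h] using hgconj n z
  set W : ℂ → ℂ := fun z ↦ ∏' n, (1 + g n z) with hW
  set G : ℕ → ℂ → ℂ := fun k z ↦ ∏' n, (1 + c k n z) with hG
  have hWG k z : W z = (1 + g k z) * G k z := by
    have h : Multipliable (Function.update (fun n ↦ 1 + g n z) k 1) := by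
      convert! multipliable_one_add_of_summable (summable_norm_of_half_disc hdisc (hcb k) z)
        using 2 with n
      by_cases h : n = k
      · subst h; simp [hc]
      · simp [hc, h]
    simp only [hW, hG]
    rw [h.tprod_eq_mul_tprod_ite']
    congr 1
    refine tprod_congr fun n ↦ ?_
    by_cases h : n = k <;> simp [hc, h]
  have hGd k : Differentiable ℂ (G k) := differentiable_tprod_of_half_disc hdisc (hcb k) (hcd k)
  have hWt n : W (t n) = 0 := by rw [hWG n, (hg0 n _).2 rfl, zero_mul]
  have hGne n : G n (t n) ≠ 0 := by
    refine tprod_one_add_ne_zero_of_summable (fun k ↦ ?_)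
      (summable_norm_of_half_disc hdisc (hcb n) _)
    by_cases h : k = n
    · simp [hc, h]
    · simp only [hc, h, if_false, ne_eq, hg0, Complex.ofReal_inj]
      exact fun h' ↦ h (ht h'.symm)
  refine ⟨W, G, differentiable_tprod_of_half_disc hdisc hb hg,
    conj_tprod_of_half_disc hdisc hb hgconj, fun z ↦ ⟨fun hz ↦ ?_, ?_⟩, fun n ↦ ?_, hGd,
    fun n ↦ conj_tprod_of_half_disc hdisc (hcb n) (hcconj n), hGne, fun n k hk ↦ ?_⟩
  · by_contra! h
    exact tprod_one_add_ne_zero_of_summable (fun n ↦ (hg0 n z).not.2 (h n))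
      (summable_norm_of_half_disc hdisc hb z) hz
  · rintro ⟨n, rfl⟩
    exact hWt n
  · have h : deriv W (t n) = deriv (g n) (t n) * G n (t n) := by
      rw [show W = (fun z ↦ 1 + g n z) * G n from funext (hWG n),
        (((hg n _).hasDerivAt.const_add 1).mul (hGd n _).hasDerivAt).deriv, (hg0 n _).2 rfl]
      simp
    rw [h]
    exact mul_ne_zero (hg' n) (hGne n)
  · have h := hWt k
    rw [hWG n, mul_eq_zero, hg0, Complex.ofReal_inj] at h
    exact h.resolve_left fun h' ↦ hk (ht h')

/-- An entire function times a high power of `z / a` is small on the disc of radius `|a| / 2`. -/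
lemma exists_pow_mul_norm_le {G : ℂ → ℂ} (hG : Continuous G) (a : ℝ) {ε : ℝ} (hε : 0 < ε) :
    ∃ m : ℕ, (a = 0 → m = 0) ∧ ∀ z : ℂ, ‖z‖ < |a| / 2 → ‖(z / a) ^ m * G z‖ ≤ ε := by
  rcases eq_or_ne a 0 with rfl | ha
  · refine ⟨0, fun _ ↦ rfl, fun z hz ↦ ?_⟩
    rw [abs_zero, zero_div] at hz
    exact absurd hz (norm_nonneg z).not_gt
  obtain ⟨C, hC⟩ := (isCompact_closedBall (0 : ℂ) (|a| / 2)).exists_bound_of_continuousOn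
    hG.continuousOn
  have hC0 : 0 ≤ C := (norm_nonneg _).trans (hC 0 (by simp; positivity))
  obtain ⟨m, hm⟩ := exists_pow_lt_of_lt_one (div_pos hε (by linarith : 0 < C + 1))
    one_half_lt_one
  refine ⟨m, fun h ↦ absurd h ha, fun z hz ↦ ?_⟩
  have hw : ‖z / (a : ℂ)‖ ≤ 1 / 2 := by
    rw [norm_div, Complex.norm_real, Real.norm_eq_abs, div_le_iff₀ (abs_pos.2 ha)]
    linarith
  have hGz : ‖G z‖ ≤ C + 1 := (hC z (by simpa using hz.le)).trans (by linarith)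
  rw [norm_mul, norm_pow]
  calc ‖z / (a : ℂ)‖ ^ m * ‖G z‖ ≤ (1 / 2) ^ m * (C + 1) := by gcongr
    _ ≤ ε := ((lt_div_iff₀ (by linarith)).1 hm).le

/-- **Interpolation**: given real entire functions `G n` with `G n (t k) = 0` exactly for `k ≠ n`,
there is a real entire function with prescribed real values at the `t n`. -/
lemma exists_entire_interpolation {t : ℕ → ℝ} (hdisc : ∀ R : ℝ, {n : ℕ | |t n| ≤ R}.Finite)
    {G : ℕ → ℂ → ℂ} (hG : ∀ n, Differentiable ℂ (G n))
    (hGconj : ∀ n z, G n (conj z) = conj (G n z)) (hGne : ∀ n, G n (t n) ≠ 0)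
    (hG0 : ∀ n k, k ≠ n → G n (t k) = 0) (v : ℕ → ℝ) :
    ∃ h : ℂ → ℂ, Differentiable ℂ h ∧ (∀ z, h (conj z) = conj (h z)) ∧ ∀ n, h (t n) = v n := by
  set F : ℕ → ℂ → ℂ := fun n z ↦ v n / G n (t n) * G n z with hF
  have hFd n : Differentiable ℂ (F n) := (hG n).const_mul _
  have hFconj n z : F n (conj z) = conj (F n z) := by
    simp [hF, hGconj, ← hGconj n (t n)]
  choose m hm0 hm using
    fun n : ℕ ↦ exists_pow_mul_norm_le (hFd n).continuous (t n) (pow_pos (one_half_pos (α := ℝ)) n)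
  refine ⟨fun z ↦ ∑' n, (z / t n) ^ m n * F n z,
    differentiable_tsum_of_half_disc hdisc hm fun n ↦ by fun_prop, fun z ↦ ?_, fun k ↦ ?_⟩
  · simp [Complex.conj_tsum, hFconj]
  · beta_reduce
    rw [tsum_eq_single k fun n hn ↦ by simp [hF, hG0 n k hn.symm]]
    have h1 : ((t k : ℂ) / t k) ^ m k = 1 := by
      rcases eq_or_ne (t k) 0 with h | h
      · simp [hm0 k h]
      · rw [div_self (by exact_mod_cast h), one_pow]
    rw [h1, one_mul, hF]
    exact div_mul_cancel₀ _ (hGne k)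


/-- **Lemma.** Given a sequence `{tₙ}` of distinct real numbers whose range is an
infinite discrete subset of `ℝ` (only finitely many points in any bounded set),
and a sequence `{sₙ}` of nonzero reals, there exists an entire function `S`
whose zero set is exactly `{tₙ}`, all of whose zeros are simple, which is
real-symmetric (`S* = S`), and satisfies `|S'(tₙ)| = |sₙ|` for every `n`. -/
theorem exists_entire_with_prescribed_zeros_and_derivatives
    (t : ℕ → ℝ) (ht : Function.Injective t)
    (hdisc : ∀ R : ℝ, {n : ℕ | |t n| ≤ R}.Finite)
    (s : ℕ → ℝ) (hs : ∀ n, s n ≠ 0) :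
    ∃ S : ℂ → ℂ,
      Differentiable ℂ S ∧
      (∀ z : ℂ, S z = 0 ↔ ∃ n : ℕ, z = (t n : ℂ)) ∧
      (∀ n : ℕ, deriv S (t n) ≠ 0) ∧
      (∀ z : ℂ, (starRingEnd ℂ) (S ((starRingEnd ℂ) z)) = S z) ∧
      (∀ n : ℕ, ‖deriv S (t n)‖ = |s n|) := by
  obtain ⟨W, G, hW, hWconj, hW0, hW', hG, hGconj, hGne, hG0⟩ := exists_weierstrass_product ht hdisc
  obtain ⟨h, hh, hhconj, hhv⟩ := exists_entire_interpolation hdisc hG hGconj hGne hG0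
    fun n ↦ Real.log (|s n| / ‖deriv W (t n)‖)
  have hderiv (n : ℕ) : deriv (fun z ↦ W z * Complex.exp (h z)) (t n)
      = deriv W (t n) * Complex.exp (h (t n)) := by
    have := ((hW (t n)).hasDerivAt.fun_mul (hh (t n)).hasDerivAt.cexp).deriv
    rw [this, (hW0 _).2 ⟨n, rfl⟩, zero_mul, add_zero]
  refine ⟨fun z ↦ W z * Complex.exp (h z), by fun_prop, fun z ↦ ?_, fun n ↦ ?_, fun z ↦ ?_,
    fun n ↦ ?_⟩
  · simp [hW0]
  · rw [hderiv]
    exact mul_ne_zero (hW' n) (Complex.exp_ne_zero _)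
  · rw [map_mul, ← Complex.exp_conj, ← hWconj, ← hhconj, Complex.conj_conj]
  · have hpos : 0 < ‖deriv W (t n)‖ := norm_pos_iff.2 (hW' n)
    rw [hderiv, hhv, ← Complex.ofReal_exp, Real.exp_log (div_pos (abs_pos.2 (hs n)) hpos), norm_mul,
      Complex.norm_real, Real.norm_of_nonneg (by positivity), mul_div_cancel₀ _ hpos.ne']
end

section
/- There exists a complex linear subspace 𝓗 of the space of functions ℂ → ℂ such that: (i) every F ∈ 𝓗 is entire; (ii) the evaluation map F ↦ (F(tₙ))ₙ∈ℕ is a linear bijection from 𝓗 onto ℓ²(μ) (so ‖F‖² := ∑ₙ μₙ|F(tₙ)|² defines a complete Hilbert space norm on 𝓗); (iii) (H1) whenever F ∈ 𝓗 and F(w) = 0 for some w ∈ ℂ \ ℝ, the function z ↦ F(z)(z − conj w)/(z − w) belongs to 𝓗 and has the same norm; (iv) (H2) for every w ∈ ℂ, the point-evaluation functional F ↦ F(w) is continuous on 𝓗 with respect to this norm; (v) (H3) whenever F ∈ 𝓗, the function F*(z) = conj(F(conj z)) belongs to 𝓗 and has the same norm. In other words, for every measure μ ∈ 𝓜 there exists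 a de Branges space that is isometrically isomorphic to ℓ²(μ). -/
noncomputable section

/-- Membership in the weighted ℓ² space: `∑ n, μ n * ‖v n‖² < ∞`. -/
def Meml2 (μ : ℕ → ℝ) (v : ℕ → ℂ) : Prop :=
  Summable fun n => μ n * ‖v n‖ ^ 2

/-- The ℓ²(μ)-norm-squared of the sequence of values of `F` at the points `tₙ`. -/
def evalNormSq (μ : ℕ → ℝ) (t : ℕ → ℝ) (F : ℂ → ℂ) : ℝ :=
  ∑' n : ℕ, μ n * ‖F (t n)‖ ^ 2

open Complex Filter Topology ComplexConjugate

/-- An infinite product `∏ (1 + f n)` of entire functions, with `∑ f n` eventually dominated by a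
summable sequence on every disc about `a`, is entire. -/
lemma differentiable_tprod_one_add {f : ℕ → ℂ → ℂ} (a : ℂ) (hf : ∀ n, Differentiable ℂ (f n))
    {u : ℕ → ℝ} (hu : Summable u)
    (hb : ∀ R : ℝ, ∀ᶠ n in cofinite, ∀ z ∈ Metric.ball a R, ‖f n z‖ ≤ u n) :
    Differentiable ℂ fun z => ∏' n, (1 + f n z) := by
  intro z
  have hz : z ∈ Metric.ball a (dist z a + 1) := by simp
  have h := Summable.hasProdLocallyUniformlyOn_one_add
    (Metric.isOpen_ball (x := a) (ε := dist z a + 1)) hu (hb _)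
    fun n => (hf n).continuous.continuousOn
  refine DifferentiableOn.differentiableAt (h.differentiableOn (.of_forall fun s => ?_)
    Metric.isOpen_ball) (Metric.isOpen_ball.mem_nhds hz)
  simpa [Finset.prod_fn] using
    DifferentiableOn.finsetProd (fun n _ => ((hf n).const_add 1).differentiableOn)

/-- The logarithm Taylor polynomials are entire. -/
lemma differentiable_logTaylor (n : ℕ) : Differentiable ℂ (logTaylor n) := by
  unfold logTaylor
  fun_prop

lemma logTaylor_conj (n : ℕ) (z : ℂ) : logTaylor n (conj z) = conj (logTaylor n z) := by
  simp [logTaylor]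

/-- The Weierstrass elementary factor of order `n`. -/
def elementaryFactor (n : ℕ) (u : ℂ) : ℂ :=
  (1 - u) * exp (-logTaylor (n + 1) (-u))

lemma differentiable_elementaryFactor (n : ℕ) : Differentiable ℂ (elementaryFactor n) := by
  have := differentiable_logTaylor (n + 1)
  unfold elementaryFactor
  fun_prop

lemma elementaryFactor_conj (n : ℕ) (u : ℂ) :
    elementaryFactor n (conj u) = conj (elementaryFactor n u) := by
  simp [elementaryFactor, ← exp_conj, ← logTaylor_conj]

lemma elementaryFactor_eq_zero_iff {n : ℕ} {u : ℂ} : elementaryFactor n u = 0 ↔ u = 1 := by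
  rw [elementaryFactor, mul_eq_zero, or_iff_left (exp_ne_zero _), sub_eq_zero, eq_comm]

lemma deriv_elementaryFactor_one_ne_zero (n : ℕ) : deriv (elementaryFactor n) 1 ≠ 0 := by
  have hd : DifferentiableAt ℂ (fun u : ℂ => exp (-logTaylor (n + 1) (-u))) 1 := by
    have := differentiable_logTaylor (n + 1)
    fun_prop
  have h := ((hasDerivAt_id (1 : ℂ)).const_sub 1).mul hd.hasDerivAt
  have h' : deriv (elementaryFactor n) 1 = _ := h.deriv
  rw [h']
  simp

lemma norm_elementaryFactor_sub_one_le (n : ℕ) {u : ℂ} (hu : ‖u‖ ≤ 1 / 2) :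
    ‖elementaryFactor n u - 1‖ ≤ 2 * (1 / 2) ^ n := by
  have hu1 : ‖-u‖ < 1 := by rw [norm_neg]; linarith
  have h1 : (1 - u) ≠ 0 := by
    intro h
    rw [← sub_eq_zero.mp h] at hu
    norm_num at hu
  have he : elementaryFactor n u = exp (log (1 + -u) - logTaylor (n + 1) (-u)) := by
    rw [sub_eq_add_neg (log _), exp_add, ← sub_eq_add_neg, exp_log h1, elementaryFactor]
  have hr := norm_log_sub_logTaylor_le n hu1
  have hr2 : ‖-u‖ ^ (n + 1) * (1 - ‖-u‖)⁻¹ / (n + 1) ≤ (1 / 2) ^ n := by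
    rw [norm_neg]
    have h2 : (1 - ‖u‖)⁻¹ ≤ 2 := by
      rw [inv_le_comm₀ (by linarith) two_pos]
      linarith
    have h3 : ‖u‖ ^ (n + 1) ≤ (1 / 2) ^ (n + 1) := pow_le_pow_left₀ (norm_nonneg _) hu _
    refine (div_le_self (mul_nonneg (by positivity) (inv_nonneg.2 (by linarith))) (by simp)).trans ?_
    calc ‖u‖ ^ (n + 1) * (1 - ‖u‖)⁻¹ ≤ (1 / 2) ^ (n + 1) * 2 :=
          mul_le_mul h3 h2 (inv_nonneg.2 (by linarith)) (by positivity)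
      _ = (1 / 2) ^ n := by ring
  have hr3 := hr.trans hr2
  rw [he]
  refine (norm_exp_sub_one_le (hr3.trans (pow_le_one₀ (by norm_num) (by norm_num)))).trans ?_
  linarith

/-- **Weierstrass**: a discrete set of real points is the zero set of a real entire function with
simple zeros. -/
lemma exists_entire_simple_zeros {t : ℕ → ℝ} (ht : Function.Injective t)
    (hdisc : ∀ R : ℝ, {n : ℕ | |t n| ≤ R}.Finite) :
    ∃ P : ℂ → ℂ, Differentiable ℂ P ∧ (∀ z, P (conj z) = conj (P z)) ∧
      (∀ z, P z = 0 ↔ ∃ n, z = t n) ∧ ∀ n, deriv P (t n) ≠ 0 := by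
  obtain ⟨a, ha⟩ : ((Set.range t)ᶜ).Nonempty := ((Set.countable_range t).dense_compl ℝ).nonempty
  have hta (n : ℕ) : ((t n : ℂ) - a) ≠ 0 := by
    rw [← ofReal_sub, ofReal_ne_zero, sub_ne_zero]
    exact fun h => ha ⟨n, h⟩
  let f (n : ℕ) (z : ℂ) : ℂ := elementaryFactor n ((z - a) / (t n - a)) - 1
  have hfd (n : ℕ) : Differentiable ℂ (f n) := by
    have := differentiable_elementaryFactor n
    unfold f
    fun_prop
  have hu : Summable fun n : ℕ => 2 * (1 / 2 : ℝ) ^ n := summable_geometric_two.mul_left 2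
  have hb (R : ℝ) : ∀ᶠ n in cofinite, ∀ z ∈ Metric.ball (a : ℂ) R, ‖f n z‖ ≤ 2 * (1 / 2) ^ n := by
    filter_upwards [(hdisc (2 * R + |a|)).eventually_cofinite_notMem] with n hn z hz
    refine norm_elementaryFactor_sub_one_le n ?_
    rw [mem_ball_iff_norm] at hz
    have h1 : 2 * R < |t n - a| := by
      have := abs_sub_abs_le_abs_sub (t n) a
      simp only [not_le] at hn
      linarith
    have h2 : ‖(t n : ℂ) - a‖ = |t n - a| := by rw [← ofReal_sub, norm_real, Real.norm_eq_abs]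
    rw [norm_div, h2, div_le_iff₀ (by linarith [norm_nonneg (z - a)])]
    linarith
  have hsum (z : ℂ) : Summable fun n => ‖f n z‖ := by
    refine hu.of_norm_bounded_eventually ?_
    filter_upwards [hb (‖z - a‖ + 1)] with n hn
    simpa using hn z (mem_ball_iff_norm.2 (lt_add_one _))
  have hf0 (n : ℕ) (z : ℂ) : 1 + f n z = 0 ↔ z = t n := by
    simp only [f, add_sub_cancel, elementaryFactor_eq_zero_iff, div_eq_one_iff_eq (hta n),
      sub_left_inj]
  refine ⟨fun z => ∏' n, (1 + f n z), differentiable_tprod_one_add a hfd hu hb, fun z => ?_,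
    fun z => ⟨fun h => ?_, fun ⟨n, hn⟩ => ?_⟩, fun m => ?_⟩
  · have hc (n : ℕ) : 1 + f n (conj z) = conj (1 + f n z) := by
      simp only [f, add_sub_cancel, ← elementaryFactor_conj]
      simp
    simp only [hc]
    exact ((multipliable_one_add_of_summable (hsum z)).map_tprod (starRingEnd ℂ)
      continuous_conj).symm
  · by_contra! hne
    exact tprod_one_add_ne_zero_of_summable (fun n => (hf0 n z).not.2 (hne n)) (hsum z) h
  · exact tprod_of_exists_eq_zero ⟨n, (hf0 n z).2 hn⟩
  · let g (n : ℕ) (z : ℂ) : ℂ := if n = m then 0 else f n z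
    have hgf (n : ℕ) (z : ℂ) : ‖g n z‖ ≤ ‖f n z‖ := by
      unfold g
      split_ifs <;> simp
    have hQ : Differentiable ℂ fun z => ∏' n, (1 + g n z) := by
      refine differentiable_tprod_one_add (a : ℂ) (fun n => ?_) hu fun R => ?_
      · unfold g
        split_ifs
        · fun_prop
        · exact hfd n
      · filter_upwards [hb R] with n hn z hz using (hgf n z).trans (hn z hz)
    have hQ0 : ∏' n, (1 + g n (t m)) ≠ 0 := by
      refine tprod_one_add_ne_zero_of_summable (fun n => ?_)
        ((hsum (t m)).of_nonneg_of_le (fun _ => norm_nonneg _) fun n => hgf n _)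
      unfold g
      split_ifs with h
      · simp
      · rw [Ne, hf0, ofReal_inj]
        exact fun h' => h (ht h'.symm)
    have hP : (fun z => ∏' n, (1 + f n z)) = fun z => (1 + f m z) * ∏' n, (1 + g n z) := by
      ext z
      rw [Multipliable.tprod_eq_mul_tprod_ite' m]
      · congr 1
        refine tprod_congr fun n => ?_
        unfold g
        split_ifs <;> simp
      · have hupd : Function.update (fun n => 1 + f n z) m 1 = fun n => 1 + g n z := by
          ext n
          by_cases h : n = m
          · subst h; simp [g]
          · simp [g, h]
        rw [hupd]
        exact multipliable_one_add_of_summable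
          ((hsum z).of_nonneg_of_le (fun _ => norm_nonneg _) fun n => hgf n z)
    have h1 : HasDerivAt (fun z : ℂ => (z - a) / (t m - a)) (1 / (t m - a)) (t m) :=
      ((hasDerivAt_id (t m : ℂ)).sub_const (a : ℂ)).div_const _
    have h2 : HasDerivAt (elementaryFactor m) (deriv (elementaryFactor m) 1)
        (((t m : ℂ) - a) / (t m - a)) := by
      rw [div_self (hta m)]
      exact (differentiable_elementaryFactor m 1).hasDerivAt
    have h3 := ((h2.comp (t m : ℂ) h1).congr_of_eventuallyEq
      (f₁ := fun z => 1 + f m z) (.of_forall fun z => by simp [f])).mul (hQ (t m)).hasDerivAt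
    rw [(hf0 m (t m)).2 rfl, zero_mul, add_zero] at h3
    rw [hP]
    refine h3.deriv.trans_ne ?_
    exact mul_ne_zero (mul_ne_zero (deriv_elementaryFactor_one_ne_zero m)
      (one_div_ne_zero (hta m))) hQ0

/-- A real entire function can be prescribed to be as large as one likes along a discrete set of
real points. -/
lemma exists_entire_ge {t : ℕ → ℝ} (hdisc : ∀ R : ℝ, {n : ℕ | |t n| ≤ R}.Finite)
    {M : ℕ → ℝ} (hM : ∀ n, 0 ≤ M n) :
    ∃ g : ℂ → ℂ, Differentiable ℂ g ∧ (∀ z, g (conj z) = conj (g z)) ∧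
      ∀ n, M n ≤ (g (t n)).re := by
  have hk (n : ℕ) : ∃ k : ℕ, M n * (1 / 2) ^ k ≤ (1 / 2) ^ n := by
    have h : Tendsto (fun k : ℕ => M n * (1 / 2 : ℝ) ^ k) atTop (𝓝 (M n * 0)) :=
      (tendsto_pow_atTop_nhds_zero_of_lt_one (by norm_num) (by norm_num)).const_mul _
    rw [mul_zero] at h
    exact (h.eventually_le_const (by positivity)).exists
  choose k hk using hk
  let b (n : ℕ) (z : ℂ) : ℂ := M n * ((1 + z ^ 2) / (1 + (t n : ℂ) ^ 2)) ^ k n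
  have hbd (n : ℕ) : Differentiable ℂ (b n) := by
    unfold b
    fun_prop
  let u (R : ℝ) (n : ℕ) : ℝ := M n * ((1 + R ^ 2) / (1 + t n ^ 2)) ^ k n
  have hu (R : ℝ) : Summable (u R) := by
    refine summable_geometric_two.of_norm_bounded_eventually ?_
    filter_upwards [(hdisc (2 * (1 + R ^ 2))).eventually_cofinite_notMem] with n hn
    simp only [not_le] at hn
    have h0 : 0 ≤ u R n := mul_nonneg (hM n) (by positivity)
    rw [Real.norm_of_nonneg h0]
    refine le_trans ?_ (hk n)
    refine mul_le_mul_of_nonneg_left (pow_le_pow_left₀ (by positivity) ?_ _) (hM n)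
    rw [div_le_iff₀ (by positivity)]
    nlinarith [sq_abs (t n), sq_nonneg R]
  have hbu (R : ℝ) (n : ℕ) (z : ℂ) (hz : ‖z‖ ≤ R) : ‖b n z‖ ≤ u R n := by
    have h1 : ‖1 + (t n : ℂ) ^ 2‖ = 1 + t n ^ 2 := by
      have : 1 + (t n : ℂ) ^ 2 = ((1 + t n ^ 2 : ℝ) : ℂ) := by push_cast; rfl
      rw [this, norm_real, Real.norm_of_nonneg (by positivity)]
    simp only [b, u, norm_mul, norm_pow, norm_div, h1, norm_real, Real.norm_of_nonneg (hM n)]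
    have h2 : ‖1 + z ^ 2‖ ≤ 1 + R ^ 2 := by
      refine (norm_add_le _ _).trans ?_
      rw [norm_one, norm_pow]
      gcongr
    have := hM n
    gcongr
  have hsum (z : ℂ) : Summable fun n => b n z := (hu ‖z‖).of_norm_bounded fun n => hbu _ n z le_rfl
  refine ⟨fun z => ∑' n, b n z, fun z => ?_, fun z => ?_, fun m => ?_⟩
  · have h := differentiableOn_tsum_of_summable_norm (hu (‖z‖ + 1))
      (fun n => (hbd n).differentiableOn) (Metric.isOpen_ball (x := (0 : ℂ)) (ε := ‖z‖ + 1))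
      fun n w hw => hbu _ n w (mem_ball_zero_iff.1 hw).le
    exact h.differentiableAt (Metric.isOpen_ball.mem_nhds (by simp))
  · rw [conj_tsum]
    exact tsum_congr fun n => by simp [b]
  · have hr (n : ℕ) : (b n (t m)).re = M n * ((1 + t m ^ 2) / (1 + t n ^ 2)) ^ k n := by
      rw [← ofReal_re (M n * _)]
      simp only [b]
      push_cast
      rfl
    rw [re_tsum (hsum _)]
    have h0 (n : ℕ) : 0 ≤ (b n (t m)).re := by
      rw [hr]
      exact mul_nonneg (hM n) (by positivity)
    have hm : M m = (b m (t m)).re := by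
      rw [hr, div_self (by positivity), one_pow, mul_one]
    rw [hm]
    exact (hasSum_re (hsum (t m)).hasSum).summable.le_tsum m fun n _ => h0 n

/-- A real entire function with prescribed discrete simple zeros whose derivative at the zeros is
as large as one likes. -/
lemma exists_entire_simple_zeros_deriv_ge {t : ℕ → ℝ} (ht : Function.Injective t)
    (hdisc : ∀ R : ℝ, {n : ℕ | |t n| ≤ R}.Finite) {B : ℕ → ℝ} (hB : ∀ n, 0 ≤ B n) :
    ∃ A : ℂ → ℂ, Differentiable ℂ A ∧ (∀ z, A (conj z) = conj (A z)) ∧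
      (∀ z, A z = 0 ↔ ∃ n, z = t n) ∧ (∀ n, deriv A (t n) ≠ 0) ∧
      ∀ n, B n ≤ ‖deriv A (t n)‖ := by
  obtain ⟨P, hPd, hPc, hP0, hP'⟩ := exists_entire_simple_zeros ht hdisc
  obtain ⟨g, hgd, hgc, hg⟩ := exists_entire_ge hdisc (M := fun n => B n / ‖deriv P (t n)‖)
    fun n => div_nonneg (hB n) (norm_nonneg _)
  have hd (n : ℕ) : deriv (fun z => P z * exp (g z)) (t n) = deriv P (t n) * exp (g (t n)) := by
    have h : deriv (fun z => P z * exp (g z)) (t n) = _ :=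
      ((hPd (t n)).hasDerivAt.mul (hgd (t n)).hasDerivAt.cexp).deriv
    rw [h, (hP0 (t n)).2 ⟨n, rfl⟩, zero_mul, add_zero]
  refine ⟨fun z => P z * exp (g z), by fun_prop, fun z => ?_, fun z => ?_, fun n => ?_, fun n => ?_⟩
  · simp [hPc, hgc, ← exp_conj]
  · simp [hP0]
  · rw [hd]
    exact mul_ne_zero (hP' n) (exp_ne_zero _)
  · have hpos : 0 < ‖deriv P (t n)‖ := norm_pos_iff.2 (hP' n)
    rw [hd, norm_mul, norm_exp, mul_comm, ← div_le_iff₀ hpos]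
    linarith [hg n, Real.add_one_le_exp (g (t n)).re]

/-- The entire function `∑ₙ vₙ A(z) / (A'(tₙ) (z - tₙ))`, which interpolates `v` along the simple
zeros `tₙ` of `A`. -/
def interpolant (A : ℂ → ℂ) (t : ℕ → ℝ) (v : ℕ → ℂ) (z : ℂ) : ℂ :=
  ∑' n, v n / deriv A (t n) * dslope A (t n) z

lemma Meml2.add {μ : ℕ → ℝ} (hμ : ∀ n, 0 < μ n) {v w : ℕ → ℂ} (hv : Meml2 μ v)
    (hw : Meml2 μ w) : Meml2 μ (v + w) := by
  refine ((Summable.add hv hw).mul_left 2).of_nonneg_of_le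
    (fun n => mul_nonneg (hμ n).le (by positivity)) fun n => ?_
  have h1 : ‖(v + w) n‖ ^ 2 ≤ 2 * (‖v n‖ ^ 2 + ‖w n‖ ^ 2) :=
    (pow_le_pow_left₀ (norm_nonneg _) (norm_add_le _ _) 2).trans add_sq_le
  nlinarith [mul_le_mul_of_nonneg_left h1 (hμ n).le]

lemma Meml2.smul {μ : ℕ → ℝ} (c : ℂ) {v : ℕ → ℂ} (hv : Meml2 μ v) : Meml2 μ (c • v) := by
  refine (Summable.mul_left (‖c‖ ^ 2) hv).congr fun n => ?_
  simp only [Pi.smul_apply, smul_eq_mul, norm_mul]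
  ring

/-- On every disc, the divided differences of an entire function `A` at its zeros are bounded
uniformly in the zero, if the zeros are discrete. -/
lemma exists_norm_dslope_le {A : ℂ → ℂ} (hA : Differentiable ℂ A) {t : ℕ → ℝ}
    (hdisc : ∀ R : ℝ, {n : ℕ | |t n| ≤ R}.Finite) (hA0 : ∀ n, A (t n) = 0) (R : ℝ) :
    ∃ C : ℝ, ∀ n, ∀ z : ℂ, ‖z‖ ≤ R → ‖dslope A (t n) z‖ ≤ C := by
  have hK := isCompact_closedBall (0 : ℂ) R
  obtain ⟨C₀, hC₀⟩ := hK.exists_bound_of_continuousOn hA.continuous.continuousOn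
  have hloc (n : ℕ) : ∃ C, ∀ z ∈ Metric.closedBall (0 : ℂ) R, ‖dslope A (t n) z‖ ≤ C :=
    hK.exists_bound_of_continuousOn (ContinuousOn.mono
      ((differentiableOn_dslope (s := Set.univ) univ_mem).2 hA.differentiableOn).continuousOn
      (Set.subset_univ _))
  choose D hD using hloc
  let S := (hdisc (R + 1)).toFinset
  have hS : 0 ≤ ∑ n ∈ S, |D n| := Finset.sum_nonneg fun _ _ => abs_nonneg _
  refine ⟨|C₀| + ∑ n ∈ S, |D n|, fun n z hz => ?_⟩
  have hz' : z ∈ Metric.closedBall (0 : ℂ) R := mem_closedBall_zero_iff.2 hz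
  by_cases hn : |t n| ≤ R + 1
  · have h1 : |D n| ≤ ∑ n ∈ S, |D n| :=
      Finset.single_le_sum (f := fun n => |D n|) (fun _ _ => abs_nonneg _) (by simpa [S] using hn)
    linarith [hD n z hz', le_abs_self (D n), abs_nonneg C₀]
  · push Not at hn
    have h1 : 1 ≤ ‖z - t n‖ := by
      have h2 := norm_sub_norm_le (t n : ℂ) z
      rw [norm_real, Real.norm_eq_abs, norm_sub_rev] at h2
      linarith
    have h2 := congrArg norm (sub_smul_dslope A (t n : ℂ) z)
    rw [hA0, sub_zero, norm_smul] at h2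
    have h3 := le_mul_of_one_le_left (norm_nonneg (dslope A (t n : ℂ) z)) h1
    linarith [hC₀ z hz', le_abs_self C₀]

lemma dslope_conj {A : ℂ → ℂ} (hA : Differentiable ℂ A) (hAc : ∀ z, A (conj z) = conj (A z))
    (s : ℝ) (z : ℂ) : dslope A s (conj z) = conj (dslope A s z) := by
  by_cases hz : z = s
  · subst hz
    have h : HasDerivAt (conj ∘ A ∘ conj) (conj (deriv A s)) (conj (s : ℂ)) :=
      (hA s).hasDerivAt.conj_conj
    have h' : (conj ∘ A ∘ conj) = A := by
      ext z
      simp [hAc]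
    rw [h', conj_ofReal] at h
    rw [conj_ofReal, dslope_same, ← h.deriv]
  · have hz' : conj z ≠ s := by
      rwa [Ne, ← conj_ofReal s, (starRingEnd ℂ).injective.eq_iff]
    have hs : A s = conj (A s) := by rw [← hAc, conj_ofReal]
    rw [dslope_of_ne _ hz', dslope_of_ne _ hz, slope_def_field, slope_def_field, hAc]
    simp [← hs]

section Interpolant

variable {μ : ℕ → ℝ} {t : ℕ → ℝ} {A : ℂ → ℂ}

lemma norm_coeff_le (hμ : ∀ n, 0 < μ n) (hA' : ∀ n, deriv A (t n) ≠ 0)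
    (hB : ∀ n, 2 ^ n / √(μ n) ≤ ‖deriv A (t n)‖) {v : ℕ → ℂ} (hv : Meml2 μ v) (n : ℕ) :
    ‖v n / deriv A (t n)‖ ≤ √(∑' n, μ n * ‖v n‖ ^ 2) * (1 / 2) ^ n := by
  have hpos : 0 < ‖deriv A (t n)‖ := norm_pos_iff.2 (hA' n)
  have hs : 0 < √(μ n) := Real.sqrt_pos.2 (hμ n)
  have h1 : √(μ n) * ‖v n‖ ≤ √(∑' n, μ n * ‖v n‖ ^ 2) := by
    refine Real.le_sqrt_of_sq_le ?_
    rw [mul_pow, Real.sq_sqrt (hμ n).le]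
    exact hv.le_tsum n fun m _ => mul_nonneg (hμ m).le (by positivity)
  have h2 : 1 ≤ (1 / 2) ^ n * (√(μ n) * ‖deriv A (t n)‖) := by
    have h3 := (div_le_iff₀ hs).1 (hB n)
    calc (1 : ℝ) = (1 / 2) ^ n * 2 ^ n := by rw [← mul_pow]; norm_num
      _ ≤ (1 / 2) ^ n * (√(μ n) * ‖deriv A (t n)‖) := by gcongr; linarith
  rw [norm_div, div_le_iff₀ hpos]
  calc ‖v n‖ ≤ ‖v n‖ * ((1 / 2) ^ n * (√(μ n) * ‖deriv A (t n)‖)) :=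
        le_mul_of_one_le_right (norm_nonneg _) h2
    _ = (√(μ n) * ‖v n‖) * ((1 / 2) ^ n * ‖deriv A (t n)‖) := by ring
    _ ≤ √(∑' n, μ n * ‖v n‖ ^ 2) * ((1 / 2) ^ n * ‖deriv A (t n)‖) := by gcongr
    _ = _ := by ring

lemma norm_interpolant_term_le (hμ : ∀ n, 0 < μ n) (hA' : ∀ n, deriv A (t n) ≠ 0)
    (hB : ∀ n, 2 ^ n / √(μ n) ≤ ‖deriv A (t n)‖) {v : ℕ → ℂ} (hv : Meml2 μ v) {C : ℝ} {z : ℂ}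
    (hC : ∀ n, ‖dslope A (t n) z‖ ≤ C) (n : ℕ) :
    ‖v n / deriv A (t n) * dslope A (t n) z‖ ≤
      √(∑' n, μ n * ‖v n‖ ^ 2) * C * (1 / 2) ^ n := by
  rw [norm_mul]
  refine (mul_le_mul (norm_coeff_le hμ hA' hB hv n) (hC n) (norm_nonneg _) (by positivity)).trans ?_
  exact le_of_eq (by ring)

lemma summable_interpolant (hμ : ∀ n, 0 < μ n)
    (hdisc : ∀ R : ℝ, {n : ℕ | |t n| ≤ R}.Finite) (hA : Differentiable ℂ A)
    (hA0 : ∀ n, A (t n) = 0) (hA' : ∀ n, deriv A (t n) ≠ 0)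
    (hB : ∀ n, 2 ^ n / √(μ n) ≤ ‖deriv A (t n)‖) {v : ℕ → ℂ} (hv : Meml2 μ v) (z : ℂ) :
    Summable fun n => v n / deriv A (t n) * dslope A (t n) z := by
  obtain ⟨C, hC⟩ := exists_norm_dslope_le hA hdisc hA0 ‖z‖
  exact (summable_geometric_two.mul_left _).of_norm_bounded
    (norm_interpolant_term_le hμ hA' hB hv fun n => hC n z le_rfl)

lemma differentiable_interpolant (hμ : ∀ n, 0 < μ n)
    (hdisc : ∀ R : ℝ, {n : ℕ | |t n| ≤ R}.Finite) (hA : Differentiable ℂ A)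
    (hA0 : ∀ n, A (t n) = 0) (hA' : ∀ n, deriv A (t n) ≠ 0)
    (hB : ∀ n, 2 ^ n / √(μ n) ≤ ‖deriv A (t n)‖) {v : ℕ → ℂ} (hv : Meml2 μ v) :
    Differentiable ℂ (interpolant A t v) := by
  intro z
  obtain ⟨C, hC⟩ := exists_norm_dslope_le hA hdisc hA0 (‖z‖ + 1)
  have hd (n : ℕ) : Differentiable ℂ (dslope A (t n)) := by
    rw [← differentiableOn_univ, differentiableOn_dslope univ_mem]
    exact hA.differentiableOn
  have h := differentiableOn_tsum_of_summable_norm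
    (F := fun n z => v n / deriv A (t n) * dslope A (t n) z)
    (summable_geometric_two.mul_left (√(∑' n, μ n * ‖v n‖ ^ 2) * C))
    (fun n => ((hd n).const_mul _).differentiableOn)
    (Metric.isOpen_ball (x := (0 : ℂ)) (ε := ‖z‖ + 1)) fun n w hw =>
      norm_interpolant_term_le hμ hA' hB hv (fun n => hC n w (mem_ball_zero_iff.1 hw).le) n
  exact h.differentiableAt (Metric.isOpen_ball.mem_nhds (by simp))

lemma interpolant_apply_node (ht : Function.Injective t) (hA0 : ∀ n, A (t n) = 0)
    (hA' : ∀ n, deriv A (t n) ≠ 0) (v : ℕ → ℂ) (m : ℕ) : interpolant A t v (t m) = v m := by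
  rw [interpolant, tsum_eq_single m]
  · rw [dslope_same, div_mul_cancel₀ _ (hA' m)]
  · intro n hn
    have h : (t m : ℂ) ≠ t n := fun h => hn (ht (ofReal_injective h)).symm
    rw [dslope_of_ne _ h, slope_def_field, hA0, hA0]
    simp

/-- If an interpolant vanishes at `w` off the zero set of `A`, then dividing by `z - w` and
multiplying by `z - conj w` amounts to doing so for the interpolated sequence. -/
lemma sub_mul_interpolant {v v' : ℕ → ℂ} {w : ℂ} (hA0 : ∀ n, A (t n) = 0)
    (hsum : ∀ z, Summable fun n => v n / deriv A (t n) * dslope A (t n) z)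
    (hw : ∀ n, (t n : ℂ) ≠ w) (hAw : A w ≠ 0) (hFw : interpolant A t v w = 0)
    (hv' : ∀ n, v' n = v n * ((t n - conj w) / (t n - w))) (z : ℂ) :
    (z - w) * interpolant A t v' z = (z - conj w) * interpolant A t v z := by
  have key (n : ℕ) : (z - w) * (v' n / deriv A (t n) * dslope A (t n) z) =
      (z - conj w) * (v n / deriv A (t n) * dslope A (t n) z) +
        (conj w - w) * A z / A w * (v n / deriv A (t n) * dslope A (t n) w) := by
    have hz := sub_smul_dslope A (t n : ℂ) z
    have hw' := sub_smul_dslope A (t n : ℂ) w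
    rw [hA0, sub_zero, smul_eq_mul] at hz hw'
    have h1 : (t n : ℂ) - w ≠ 0 := sub_ne_zero.2 (hw n)
    have h2 : w - t n ≠ 0 := sub_ne_zero.2 (hw n).symm
    have h3 : dslope A (t n) w = A w / (w - t n) := by rw [eq_div_iff h2, mul_comm, hw']
    rw [hv', h3, ← hz, ← neg_sub (t n : ℂ) w]
    by_cases hd : deriv A (t n) = 0
    · simp [hd]
    field_simp
    ring
  rw [interpolant, ← tsum_mul_left, tsum_congr key,
    ((hsum z).mul_left _).tsum_add ((hsum w).mul_left _), tsum_mul_left, tsum_mul_left]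
  change _ + _ * interpolant A t v w = _
  rw [hFw, mul_zero, add_zero]
  rfl

end Interpolant

/-- **Theorem.** For every measure `μ ∈ 𝓜` (given by distinct real points `tₙ`
forming a discrete set and positive masses `μₙ`) there exists a de Branges
space that is isometrically isomorphic to `ℓ²(μ)`: a complex linear space `𝓗`
of entire functions such that evaluation `F ↦ (F(tₙ))ₙ` is a linear bijection
onto `ℓ²(μ)`, satisfying the axioms (H1), (H2), (H3) with respect to the norm
`‖F‖² = ∑ₙ μₙ |F(tₙ)|²`. In (H1) the quotient `F(z)(z − conj w)/(z − w)` is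
understood with its removable singularity at `w` filled in, i.e. as the unique
member `G` of `𝓗` agreeing with it away from `w`. -/
theorem exists_deBranges_space_isometric_to_l2
    (μ : ℕ → ℝ) (hμ : ∀ n, 0 < μ n)
    (t : ℕ → ℝ) (ht : Function.Injective t)
    (hdisc : ∀ R : ℝ, {n : ℕ | |t n| ≤ R}.Finite) :
    ∃ H : Set (ℂ → ℂ),
      -- 𝓗 is a complex linear subspace of entire functions
      (0 : ℂ → ℂ) ∈ H ∧
      (∀ F ∈ H, ∀ G ∈ H, F + G ∈ H) ∧
      (∀ c : ℂ, ∀ F ∈ H, c • F ∈ H) ∧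
      (∀ F ∈ H, Differentiable ℂ F) ∧
      -- evaluation is a bijection onto ℓ²(μ)
      (∀ F ∈ H, Meml2 μ (fun n => F (t n))) ∧
      (∀ F ∈ H, ∀ G ∈ H, (∀ n : ℕ, F (t n) = G (t n)) → F = G) ∧
      (∀ v : ℕ → ℂ, Meml2 μ v → ∃ F ∈ H, ∀ n : ℕ, F (t n) = v n) ∧
      -- (H1), with equality of norms
      (∀ F ∈ H, ∀ w : ℂ, w.im ≠ 0 → F w = 0 →
        ∃ G ∈ H, (∀ z : ℂ, z ≠ w → G z = F z * (z - (starRingEnd ℂ) w) / (z - w)) ∧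
          evalNormSq μ t G = evalNormSq μ t F) ∧
      -- (H2): every point evaluation is a bounded (hence continuous) functional
      (∀ w : ℂ, ∃ C : ℝ, ∀ F ∈ H, ‖F w‖ ≤ C * Real.sqrt (evalNormSq μ t F)) ∧
      -- (H3), with equality of norms
      (∀ F ∈ H, (fun z => (starRingEnd ℂ) (F ((starRingEnd ℂ) z))) ∈ H ∧
        evalNormSq μ t (fun z => (starRingEnd ℂ) (F ((starRingEnd ℂ) z))) =
          evalNormSq μ t F) := by
  obtain ⟨A, hA, hAc, hAz, hA', hB⟩ := exists_entire_simple_zeros_deriv_ge ht hdisc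
    (B := fun n => 2 ^ n / √(μ n)) fun n => by positivity
  have hA0 (n : ℕ) : A (t n) = 0 := (hAz _).2 ⟨n, rfl⟩
  have hnode := interpolant_apply_node ht hA0 hA'
  have hsum {v : ℕ → ℂ} (hv : Meml2 μ v) := summable_interpolant hμ hdisc hA hA0 hA' hB hv
  refine ⟨{F | ∃ v, Meml2 μ v ∧ interpolant A t v = F}, ⟨0, ?_, ?_⟩, ?_, ?_, ?_, ?_, ?_, ?_, ?_,
    fun w => ?_, ?_⟩
  · simp [Meml2]
  · ext z
    simp [interpolant]
  · rintro _ ⟨v, hv, rfl⟩ _ ⟨v', hv', rfl⟩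
    refine ⟨v + v', hv.add hμ hv', funext fun z => ?_⟩
    simp only [interpolant, Pi.add_apply, add_div, add_mul]
    exact (hsum hv z).tsum_add (hsum hv' z)
  · rintro c _ ⟨v, hv, rfl⟩
    refine ⟨c • v, hv.smul c, funext fun z => ?_⟩
    simp only [interpolant, Pi.smul_apply, smul_eq_mul, mul_div_assoc, mul_assoc, tsum_mul_left]
  · rintro _ ⟨v, hv, rfl⟩
    exact differentiable_interpolant hμ hdisc hA hA0 hA' hB hv
  · rintro _ ⟨v, hv, rfl⟩
    simpa only [hnode] using hv
  · rintro _ ⟨v, -, rfl⟩ _ ⟨v', -, rfl⟩ h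
    simp only [hnode] at h
    rw [funext h]
  · exact fun v hv => ⟨_, ⟨v, hv, rfl⟩, hnode v⟩
  · rintro _ ⟨v, hv, rfl⟩ w hw hFw
    have htw (n : ℕ) : (t n : ℂ) ≠ w := by
      rintro rfl
      exact hw (ofReal_im _)
    have hAw : A w ≠ 0 := by
      rw [Ne, hAz]
      rintro ⟨n, hn⟩
      exact htw n hn.symm
    have hnorm (n : ℕ) : ‖v n * ((t n - conj w) / (t n - w))‖ = ‖v n‖ := by
      have h : (t n : ℂ) - conj w = conj (t n - w) := by simp
      rw [norm_mul, norm_div, h, norm_conj, div_self (norm_ne_zero_iff.2 (sub_ne_zero.2 (htw n))),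
        mul_one]
    have hv' : Meml2 μ fun n => v n * ((t n - conj w) / (t n - w)) := by
      simpa only [Meml2, hnorm] using hv
    refine ⟨_, ⟨_, hv', rfl⟩, fun z hz => ?_, ?_⟩
    · rw [eq_div_iff (sub_ne_zero.2 hz), mul_comm, mul_comm (interpolant A t v z)]
      exact sub_mul_interpolant hA0 (hsum hv) htw hAw hFw (fun _ => rfl) z
    · simp only [evalNormSq, hnode, hnorm]
  · obtain ⟨C, hC⟩ := exists_norm_dslope_le hA hdisc hA0 ‖w‖
    refine ⟨2 * C, ?_⟩
    rintro _ ⟨v, hv, rfl⟩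
    have h := tsum_of_norm_bounded (summable_geometric_two.hasSum.mul_left
      (√(∑' n, μ n * ‖v n‖ ^ 2) * C))
      (norm_interpolant_term_le hμ hA' hB hv fun n => hC n w le_rfl)
    rw [tsum_geometric_two] at h
    simp only [evalNormSq, hnode]
    calc ‖interpolant A t v w‖ ≤ _ := h
      _ = _ := by ring
  · rintro _ ⟨v, hv, rfl⟩
    refine ⟨⟨fun n => conj (v n), ?_, funext fun z => ?_⟩, ?_⟩
    · simpa only [Meml2, norm_conj] using hv
    · have hd (n : ℕ) : conj (deriv A (t n)) = deriv A (t n) := by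
        have h := dslope_conj hA hAc (t n) (t n)
        rw [conj_ofReal, dslope_same] at h
        exact h.symm
      simp only [interpolant]
      rw [conj_tsum]
      refine tsum_congr fun n => ?_
      rw [dslope_conj hA hAc, map_mul, map_div₀, hd, conj_conj]
    · simp only [evalNormSq, conj_ofReal, norm_conj]
end
end
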